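/- arXiv:2203.15091 — 4 statements merged into one kernel-verified Lean document; each statement's English description precedes it below -/
import Mathlib

section
/- Let v, w ∈ [0,1]. Then 𝒬(w,v) ≤ 0 for every boundary entropy flux pair (ℱ,𝒬) if and only if w ∈ {v} ∪ [1 − min{1/2, v}, 1]. (This is the pointwise characterisation of the left boundary condition in Proposition 2.4.) -/
open Set

/-- A Lax entropy flux pair for the flux `J u = u * (1 - u)`:
`F`, `Q` are twice continuously differentiable with `Q' = (1 - 2u) F'`
and `F'' ≥ 0` on `[0,1]`. -/
def IsLaxPair (F Q : ℝ → ℝ) : Prop :=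
  ContDiff ℝ 2 F ∧ ContDiff ℝ 2 Q ∧
  (∀ u ∈ Set.Icc (0:ℝ) 1, deriv Q u = (1 - 2*u) * deriv F u) ∧
  (∀ u ∈ Set.Icc (0:ℝ) 1, 0 ≤ deriv (deriv F) u)

/-- A boundary entropy flux pair: for each `v ∈ [0,1]`, `(F ·  v, Q · v)` is a
Lax entropy flux pair and `F v v = ∂_u F(u,v)|_{u=v} = Q v v = 0`. -/
def IsBoundaryPair (F Q : ℝ → ℝ → ℝ) : Prop :=
  ∀ v ∈ Set.Icc (0:ℝ) 1,
    IsLaxPair (fun u => F u v) (fun u => Q u v) ∧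
    F v v = 0 ∧ deriv (fun u => F u v) v = 0 ∧ Q v v = 0

/-- The exponential entropy with rate `n`: its derivative in `u` is `1 - exp (-n (u - v))`. -/
noncomputable def expEntropy (n u v : ℝ) : ℝ :=
  u - v + (Real.exp (-n * (u - v)) - 1) / n

/-- The flux associated with `expEntropy`. -/
noncomputable def expFlux (n u v : ℝ) : ℝ :=
  u * (1 - u) - v * (1 - v)
    - Real.exp (-n * (u - v)) * ((2 * u - 1) / n + 2 / n ^ 2)
    + ((2 * v - 1) / n + 2 / n ^ 2)

lemma hasDerivAt_exp_neg_mul_sub (n u v : ℝ) :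
    HasDerivAt (fun u => Real.exp (-n * (u - v))) (-n * Real.exp (-n * (u - v))) u := by
  have h := (((hasDerivAt_id u).sub_const v).const_mul (-n)).exp
  simpa [mul_comm] using h

lemma hasDerivAt_expEntropy {n : ℝ} (hn : 0 < n) (u v : ℝ) :
    HasDerivAt (fun u => expEntropy n u v) (1 - Real.exp (-n * (u - v))) u := by
  have h := ((hasDerivAt_id u).sub_const v).add
    (((hasDerivAt_exp_neg_mul_sub n u v).sub_const 1).div_const n)
  refine h.congr_deriv ?_
  field_simp
  ring

lemma hasDerivAt_expFlux {n : ℝ} (hn : 0 < n) (u v : ℝ) :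
    HasDerivAt (fun u => expFlux n u v) ((1 - 2 * u) * (1 - Real.exp (-n * (u - v)))) u := by
  have hJ := ((hasDerivAt_id u).mul ((hasDerivAt_id u).const_sub 1)).sub_const (v * (1 - v))
  have hL := ((((hasDerivAt_id u).const_mul 2).sub_const 1).div_const n).add_const (2 / n ^ 2)
  have h := (hJ.sub ((hasDerivAt_exp_neg_mul_sub n u v).mul hL)).add_const
    ((2 * v - 1) / n + 2 / n ^ 2)
  refine h.congr_deriv ?_
  simp only [id]
  field_simp
  ring

lemma isBoundaryPair_exp {n : ℝ} (hn : 0 < n) :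
    IsBoundaryPair (expEntropy n) (expFlux n) := by
  intro v _
  have hF : deriv (fun u => expEntropy n u v) = fun u => 1 - Real.exp (-n * (u - v)) :=
    funext fun u => (hasDerivAt_expEntropy hn u v).deriv
  refine ⟨⟨?_, ?_, ?_, ?_⟩, ?_, ?_, ?_⟩
  · unfold expEntropy; fun_prop
  · unfold expFlux; fun_prop
  · intro u _
    rw [hF, (hasDerivAt_expFlux hn u v).deriv]
  · intro u _
    rw [hF, ((hasDerivAt_exp_neg_mul_sub n u v).const_sub 1).deriv]
    have := Real.exp_pos (-n * (u - v))
    nlinarith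
  · simp [expEntropy]
  · simp [hF]
  · simp [expFlux]

/-- To the right of `v`, the exponential flux is positive at large rates wherever the flux
function exceeds its value at `v`. -/
lemma exists_expFlux_pos_of_lt {v w : ℝ} (hv : 0 ≤ v) (hw : w ≤ 1) (hvw : v < w)
    (hsum : w < 1 - v) : ∃ n : ℝ, 0 < n ∧ 0 < expFlux n w v := by
  obtain ⟨D, hD⟩ : ∃ D, D = w * (1 - w) - v * (1 - v) := ⟨_, rfl⟩
  have hD0 : 0 < D := by nlinarith [mul_pos (sub_pos.2 hvw) (sub_pos.2 hsum)]
  have hD1 : D ≤ 1 := by nlinarith [sq_nonneg (w - 1 / 2)]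
  refine ⟨8 / D, by positivity, ?_⟩
  have he0 := Real.exp_pos (-(8 / D) * (w - v))
  have he1 : Real.exp (-(8 / D) * (w - v)) ≤ 1 := by
    rw [Real.exp_le_one_iff]
    have : 0 < 8 / D * (w - v) := mul_pos (by positivity) (by linarith)
    linarith
  have h1 : ∀ x : ℝ, (2 * x - 1) / (8 / D) + 2 / (8 / D) ^ 2
      = (2 * x - 1) * D / 8 + D ^ 2 / 32 := by
    intro x; field_simp; ring
  unfold expFlux
  rw [h1, h1, ← hD]
  generalize Real.exp (-(8 / D) * (w - v)) = e at *
  have h2 : (2 * w - 1) * D / 8 + D ^ 2 / 32 ≤ D / 4 := by nlinarith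
  have h3 : e * ((2 * w - 1) * D / 8 + D ^ 2 / 32) ≤ e * (D / 4) :=
    mul_le_mul_of_nonneg_left h2 he0.le
  nlinarith [mul_nonneg hv hD0.le]

/-- To the left of `v` and of `1 / 2`, the exponential flux is positive at large rates. -/
lemma exists_expFlux_pos_of_gt {v w : ℝ} (hv : v ≤ 1) (hw : 0 ≤ w) (hwv : w < v)
    (hw2 : w < 1 / 2) : ∃ n : ℝ, 0 < n ∧ 0 < expFlux n w v := by
  obtain ⟨d, hd⟩ : ∃ d, d = v - w := ⟨_, rfl⟩
  obtain ⟨δ, hδ⟩ : ∃ δ, δ = 1 - 2 * w := ⟨_, rfl⟩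
  have hd0 : 0 < d := by linarith
  have hδ0 : 0 < δ := by linarith
  obtain ⟨n, hn⟩ : ∃ n, n = 4 / (d ^ 2 * δ) := ⟨_, rfl⟩
  have hn0 : 0 < n := by rw [hn]; positivity
  have hnd : n * d ^ 2 * δ = 4 := by rw [hn]; field_simp
  have hd1 : d ^ 2 ≤ 1 := by nlinarith
  have hnδ : 4 ≤ n * δ := by nlinarith [mul_pos hn0 hδ0]
  have hn4 : 4 ≤ n := by nlinarith
  refine ⟨n, hn0, ?_⟩
  have he : n ^ 2 * d ^ 2 / 2 ≤ Real.exp (-n * (w - v)) := by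
    have h := Real.quadratic_le_exp_of_nonneg (mul_pos hn0 hd0).le
    rw [show -n * (w - v) = n * d by rw [hd]; ring]
    nlinarith [mul_pos hn0 hd0]
  have hcoef : (2 * w - 1) / n + 2 / n ^ 2 ≤ -(δ / (2 * n)) := by
    have : (2 * w - 1) / n + 2 / n ^ 2 = -(δ / (2 * n)) - (n * δ - 4) / (2 * n ^ 2) := by
      rw [hδ]; field_simp; ring
    have : 0 ≤ (n * δ - 4) / (2 * n ^ 2) := div_nonneg (by linarith) (by positivity)
    linarith
  have hmain : 1 ≤ Real.exp (-n * (w - v)) * (δ / (2 * n)) := by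
    calc (1 : ℝ) = n ^ 2 * d ^ 2 / 2 * (δ / (2 * n)) := by
          field_simp; linarith
      _ ≤ _ := mul_le_mul_of_nonneg_right he (by positivity)
  have hexp := mul_le_mul_of_nonneg_left hcoef (Real.exp_pos (-n * (w - v))).le
  have hv' : -(1 / 4) ≤ (2 * v - 1) / n := by
    rw [le_div_iff₀ hn0]; linarith
  have : 0 < 2 / n ^ 2 := by positivity
  unfold expFlux
  nlinarith [sq_nonneg (v - 1 / 2)]

lemma IsLaxPair.monotoneOn_deriv {F Q : ℝ → ℝ} (h : IsLaxPair F Q) :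
    MonotoneOn (deriv F) (Icc 0 1) := by
  have hd : ContDiff ℝ 1 (deriv F) := ((contDiff_succ_iff_deriv (n := 1)).1 h.1).2.2
  refine monotoneOn_of_deriv_nonneg (convex_Icc 0 1) hd.continuous.continuousOn
    (hd.differentiable one_ne_zero).differentiableOn fun u hu => h.2.2.2 u (interior_subset hu)

/-- Comparison of the flux of a Lax pair with a multiple of `u (1 - u)`. -/
lemma IsLaxPair.flux_sub_le {F Q : ℝ → ℝ} (h : IsLaxPair F Q) {a b : ℝ} (c : ℝ)
    (ha : 0 ≤ a) (hab : a ≤ b) (hb : b ≤ 1)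
    (hc : ∀ u ∈ Icc a b, (1 - 2 * u) * (deriv F u - c) ≤ 0) :
    Q b - Q a ≤ c * (b * (1 - b) - a * (1 - a)) := by
  have hQ : Differentiable ℝ Q := h.2.1.differentiable two_ne_zero
  have hd : ∀ u, HasDerivAt (fun u => Q u - c * (u * (1 - u)))
      (deriv Q u - c * (1 - 2 * u)) u := by
    intro u
    have hJ := ((hasDerivAt_id u).mul ((hasDerivAt_id u).const_sub 1)).const_mul c
    refine ((hQ u).hasDerivAt.sub hJ).congr_deriv ?_
    simp only [id]
    ring
  have hanti : AntitoneOn (fun u => Q u - c * (u * (1 - u))) (Icc a b) := by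
    refine antitoneOn_of_deriv_nonpos (convex_Icc a b)
      (fun u _ => (hd u).continuousAt.continuousWithinAt)
      (fun u _ => (hd u).differentiableAt.differentiableWithinAt) fun u hu => ?_
    have hu' := interior_subset hu
    rw [(hd u).deriv, h.2.2.1 u ⟨ha.trans hu'.1, hu'.2.trans hb⟩]
    linarith [hc u hu']
  have := hanti (left_mem_Icc.2 hab) (right_mem_Icc.2 hab) hab
  simp only at this
  linarith

/-- If the derivative of the entropy vanishes at `v`, its flux increases from `w` to `v`
whenever `1 / 2 ≤ w ≤ v`. -/
lemma IsLaxPair.flux_le_of_le {F Q : ℝ → ℝ} (h : IsLaxPair F Q) {v w : ℝ}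
    (hw : 1 / 2 ≤ w) (hwv : w ≤ v) (hv : v ≤ 1) (h0 : deriv F v = 0) : Q w ≤ Q v := by
  refine monotoneOn_of_deriv_nonneg (convex_Icc w v) h.2.1.continuous.continuousOn
    (h.2.1.differentiable two_ne_zero).differentiableOn (fun u hu => ?_)
    (left_mem_Icc.2 hwv) (right_mem_Icc.2 hwv) hwv
  have hu' := interior_subset hu
  have hu1 : u ∈ Icc (0 : ℝ) 1 := ⟨by linarith [hu'.1], by linarith [hu'.2]⟩
  rw [h.2.2.1 u hu1]
  have := h.monotoneOn_deriv hu1 ⟨by linarith, hv⟩ hu'.2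
  exact mul_nonneg_of_nonpos_of_nonpos (by linarith [hu'.1]) (by linarith)

/-- Pointwise characterisation of the left boundary condition (Proposition 2.4):
`Q w v ≤ 0` for every boundary entropy flux pair iff
`w ∈ {v} ∪ [1 − min(1/2, v), 1]`. -/
theorem stmt0 (v w : ℝ) (hv : v ∈ Set.Icc (0:ℝ) 1) (hw : w ∈ Set.Icc (0:ℝ) 1) :
    (∀ F Q : ℝ → ℝ → ℝ, IsBoundaryPair F Q → Q w v ≤ 0) ↔
      (w = v ∨ w ∈ Set.Icc (1 - min (1/2) v) 1) := by
  constructor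
  · intro h
    by_contra! hcon
    obtain ⟨hne, hnot⟩ := hcon
    have hlt : w < 1 - min (1 / 2) v := by
      by_contra! hle
      exact hnot ⟨hle, hw.2⟩
    have hpos : ∃ n : ℝ, 0 < n ∧ 0 < expFlux n w v := by
      rcases lt_or_gt_of_ne hne with hwv | hvw
      · refine exists_expFlux_pos_of_gt hv.2 hw.1 hwv ?_
        rcases min_cases (1 / 2) v with ⟨he, _⟩ | ⟨he, _⟩ <;> rw [he] at hlt <;> linarith
      · refine exists_expFlux_pos_of_lt hv.1 hw.2 hvw ?_
        rcases min_cases (1 / 2) v with ⟨he, _⟩ | ⟨he, _⟩ <;> rw [he] at hlt <;> linarith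
    obtain ⟨n, hn, hp⟩ := hpos
    exact (h _ _ (isBoundaryPair_exp hn)).not_gt hp
  · intro hwmem F Q hFQ
    obtain ⟨hL, -, h0, hQ⟩ := hFQ v hv
    rcases hwmem with rfl | ⟨hlow, -⟩
    · exact hQ.le
    have hmono := hL.monotoneOn_deriv
    rcases le_total (1 / 2) v with hv2 | hv2
    · rw [min_eq_left hv2] at hlow
      rcases le_total w v with hwv | hvw
      · exact (hL.flux_le_of_le (by linarith) hwv hv.2 h0).trans hQ.le
      · have := hL.flux_sub_le 0 hv.1 hvw hw.2 fun u hu => by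
          have := hmono hv ⟨hv.1.trans hu.1, hu.2.trans hw.2⟩ hu.1
          exact mul_nonpos_of_nonpos_of_nonneg (by linarith [hu.1]) (by linarith)
        linarith
    · rw [min_eq_right hv2] at hlow
      have hhalf : (1 / 2 : ℝ) ∈ Icc (0 : ℝ) 1 := by constructor <;> norm_num
      have hc := hmono hv hhalf hv2
      have := hL.flux_sub_le (deriv (fun u => F u v) (1 / 2)) hv.1 (by linarith) hw.2
        fun u hu => by
          have hu1 : u ∈ Icc (0 : ℝ) 1 := ⟨hv.1.trans hu.1, hu.2.trans hw.2⟩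
          rcases le_total u (1 / 2) with hu2 | hu2
          · have := hmono hu1 hhalf hu2
            exact mul_nonpos_of_nonneg_of_nonpos (by linarith) (by linarith)
          · have := hmono hhalf hu1 hu2
            exact mul_nonpos_of_nonpos_of_nonneg (by linarith) (by linarith)
      rw [h0] at hc
      have hJ : w * (1 - w) - v * (1 - v) ≤ 0 := by
        nlinarith [mul_nonneg (show 0 ≤ w - v by linarith) (show 0 ≤ w + v - 1 by linarith)]
      linarith [mul_nonpos_of_nonneg_of_nonpos hc hJ]
end

section
/- Let v, w ∈ [0,1]. Then 𝒬(w,v) ≥ 0 for every boundary entropy flux pair (ℱ,𝒬) if and only if w ∈ [0, 1 − max{1/2, v}] ∪ {v}. (This is the pointwise characterisation of the right boundary condition in Proposition 2.4.) -/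
open Set

/-- Integration by parts writes the entropy flux as an integral against the second derivative
of the entropy. -/
theorem IsLaxPair.flux_eq_integral {F Q : ℝ → ℝ} (h : IsLaxPair F Q) {v w : ℝ}
    (hv : v ∈ Icc (0:ℝ) 1) (hw : w ∈ Icc (0:ℝ) 1) (hF : deriv F v = 0) (hQ : Q v = 0) :
    Q w = ∫ u in v..w, (w * (1 - w) - u * (1 - u)) * deriv (deriv F) u := by
  obtain ⟨hFC, hQC, hQF, -⟩ := h
  have hF' : ContDiff ℝ 1 (deriv F) := ((contDiff_succ_iff_deriv (n := 1)).1 hFC).2.2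
  have hF'' : Continuous (deriv (deriv F)) := hF'.continuous_deriv le_rfl
  have hsub : uIcc v w ⊆ Icc 0 1 := uIcc_subset_Icc hv hw
  have hderiv : ∀ u ∈ uIcc v w,
      HasDerivAt (fun u => Q u + (w * (1 - w) - u * (1 - u)) * deriv F u)
        ((w * (1 - w) - u * (1 - u)) * deriv (deriv F) u) u := by
    intro u hu
    have hQu := (hQC.differentiable (by norm_num) u).hasDerivAt
    rw [hQF u (hsub hu)] at hQu
    have hFu := (hF'.differentiable (by norm_num) u).hasDerivAt
    have hJ : HasDerivAt (fun u : ℝ => w * (1 - w) - u * (1 - u)) (-(1 - 2 * u)) u := by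
      refine (((hasDerivAt_id' u).mul ((hasDerivAt_id' u).const_sub 1)).const_sub
        (w * (1 - w))).congr_deriv ?_
      ring
    refine (hQu.add (hJ.mul hFu)).congr_deriv ?_
    ring
  rw [intervalIntegral.integral_eq_sub_of_hasDerivAt hderiv
    ((by fun_prop : Continuous _).intervalIntegrable _ _)]
  simp [hF, hQ]

/-- The primitive of a `C^n` function is `C^(n+1)`. -/
theorem contDiff_primitive {f : ℝ → ℝ} {n : ℕ} (hf : ContDiff ℝ n f) (a : ℝ) :
    ContDiff ℝ (n + 1) (fun u => ∫ s in a..u, f s) := by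
  have hd : ∀ u, HasDerivAt (fun u => ∫ s in a..u, f s) (f u) u := fun u =>
    hf.continuous.integral_hasStrictDerivAt a u |>.hasDerivAt
  refine contDiff_succ_iff_deriv.2 ⟨fun u => (hd u).differentiableAt, by simp, ?_⟩
  rwa [show deriv (fun u => ∫ s in a..u, f s) = f from funext fun u => (hd u).deriv]

/-- Every nonnegative continuous function is `∂²F/∂u²` for some boundary entropy flux pair. -/
theorem exists_isBoundaryPair_deriv_deriv_eq {g : ℝ → ℝ} (hg : Continuous g)
    (hg0 : ∀ u, 0 ≤ g u) :
    ∃ F Q : ℝ → ℝ → ℝ, IsBoundaryPair F Q ∧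
      ∀ v, deriv (deriv fun u => F u v) = g := by
  have hf (v : ℝ) : ContDiff ℝ 1 (fun u => ∫ s in v..u, g s) := by
    simpa using contDiff_primitive (n := 0) (contDiff_zero.2 hg) v
  have hq (v : ℝ) : ContDiff ℝ 1 (fun u => (1 - 2 * u) * ∫ s in v..u, g s) :=
    (by fun_prop : ContDiff ℝ 1 fun u : ℝ => 1 - 2 * u).mul (hf v)
  have hdF (v : ℝ) : deriv (fun u => ∫ t in v..u, ∫ s in v..t, g s)
      = fun u => ∫ s in v..u, g s :=
    funext fun u => (hf v).continuous.deriv_integral _ v u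
  have hdd (v : ℝ) : deriv (deriv (fun u => ∫ t in v..u, ∫ s in v..t, g s)) = g := by
    rw [hdF]
    exact funext fun u => hg.deriv_integral _ v u
  refine ⟨fun u v => ∫ t in v..u, ∫ s in v..t, g s,
    fun u v => ∫ t in v..u, (1 - 2 * t) * ∫ s in v..t, g s, fun v _ => ⟨⟨?_, ?_, ?_, ?_⟩,
      by simp, by simp [hdF], by simp⟩, hdd⟩
  · simpa [one_add_one_eq_two] using contDiff_primitive (n := 1) (hf v) v
  · simpa [one_add_one_eq_two] using contDiff_primitive (n := 1) (hq v) v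
  · intro u _
    rw [hdF]
    exact (hq v).continuous.deriv_integral _ v u
  · intro u _
    rw [hdd]
    exact hg0 u

/-- Pointwise characterisation of the right boundary condition (Proposition 2.4):
`Q w v ≥ 0` for every boundary entropy flux pair iff
`w ∈ [0, 1 − max(1/2, v)] ∪ {v}`. -/
theorem stmt1 (v w : ℝ) (hv : v ∈ Set.Icc (0:ℝ) 1) (hw : w ∈ Set.Icc (0:ℝ) 1) :
    (∀ F Q : ℝ → ℝ → ℝ, IsBoundaryPair F Q → 0 ≤ Q w v) ↔
      (w ∈ Set.Icc (0:ℝ) (1 - max (1/2) v) ∨ w = v) := by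
  constructor
  · intro h
    by_contra hcon
    push Not at hcon
    obtain ⟨hwI, hne⟩ := hcon
    have hmax : 1 - max (1/2) v < w := by
      by_contra! hle
      exact hwI ⟨hw.1, hle⟩
    have hor : 1 / 2 < w ∨ 1 - v < w := by
      rcases max_choice (1/2) v with hm | hm <;> rw [hm] at hmax
      · left; linarith
      · right; exact hmax
    rcases lt_or_gt_of_ne hne with hlt | hlt
    · obtain ⟨F, Q, hFQ, hdd⟩ := exists_isBoundaryPair_deriv_deriv_eq
        (g := fun u => max 0 (w * (1 - w) - u * (1 - u))) (by fun_prop)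
        (fun u => le_max_left _ _)
      obtain ⟨hL, -, hF, hQ⟩ := hFQ v hv
      have hQw := h F Q hFQ
      rw [hL.flux_eq_integral hv hw hF hQ, hdd, intervalIntegral.integral_symm] at hQw
      have hpos : 0 < ∫ u in w..v, (w * (1 - w) - u * (1 - u)) *
          max 0 (w * (1 - w) - u * (1 - u)) := by
        refine intervalIntegral.integral_pos hlt (by fun_prop) (fun u _ => ?_)
          ⟨v, ⟨hlt.le, le_rfl⟩, ?_⟩
        · rcases max_cases 0 (w * (1 - w) - u * (1 - u)) with ⟨h1, -⟩ | ⟨h1, -⟩ <;> rw [h1]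
          · simp
          · exact mul_self_nonneg _
        · have hJ : 0 < w * (1 - w) - v * (1 - v) := by
            have hvw : 0 < v + w - 1 := by rcases hor with h1 | h1 <;> linarith
            nlinarith [mul_pos (sub_pos.2 hlt) hvw]
          exact mul_pos hJ (lt_max_of_lt_right hJ)
      linarith
    · obtain ⟨F, Q, hFQ, hdd⟩ := exists_isBoundaryPair_deriv_deriv_eq
        (g := fun u => max 0 (u * (1 - u) - w * (1 - w))) (by fun_prop)
        (fun u => le_max_left _ _)
      obtain ⟨hL, -, hF, hQ⟩ := hFQ v hv
      have hQw := h F Q hFQ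
      rw [hL.flux_eq_integral hv hw hF hQ, hdd] at hQw
      have hpos : 0 < ∫ u in v..w, -((w * (1 - w) - u * (1 - u)) *
          max 0 (u * (1 - u) - w * (1 - w))) := by
        have hw2 : 1 / 2 < w := by rcases hor with h1 | h1 <;> linarith
        refine intervalIntegral.integral_pos hlt (by fun_prop) (fun u _ => ?_)
          ⟨max v (1/2), ⟨le_max_left _ _, max_le hlt.le hw2.le⟩, ?_⟩
        · rcases max_cases 0 (u * (1 - u) - w * (1 - w)) with ⟨h1, -⟩ | ⟨h1, -⟩ <;> rw [h1]
          · simp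
          · nlinarith [mul_self_nonneg (u * (1 - u) - w * (1 - w))]
        · have hcw : max v (1/2) < w := max_lt hlt hw2
          have hc : 1 / 2 ≤ max v (1/2) := le_max_right _ _
          generalize max v (1/2) = c at hcw hc
          have hJ : 0 < c * (1 - c) - w * (1 - w) := by
            nlinarith [mul_pos (sub_pos.2 hcw) (by linarith : 0 < c + w - 1)]
          rw [← neg_mul, neg_sub]
          exact mul_pos hJ (lt_max_of_lt_right hJ)
      rw [intervalIntegral.integral_neg] at hpos
      linarith
  · intro h F Q hFQ
    obtain ⟨hL, -, hF, hQ⟩ := hFQ v hv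
    rcases h with ⟨-, h⟩ | rfl
    · have hw2 : w ≤ 1 / 2 := by linarith [le_max_left (1/2) v]
      have hwv : w ≤ 1 - v := by linarith [le_max_right (1/2) v]
      rw [hL.flux_eq_integral hv hw hF hQ]
      rcases le_total v w with hle | hle
      · refine intervalIntegral.integral_nonneg hle fun u hu => mul_nonneg ?_
          (hL.2.2.2 u ⟨hv.1.trans hu.1, hu.2.trans hw.2⟩)
        nlinarith [mul_nonneg (sub_nonneg.2 hu.2) (by linarith [hu.2] : 0 ≤ 1 - u - w)]
      · rw [intervalIntegral.integral_symm, ← intervalIntegral.integral_neg]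
        refine intervalIntegral.integral_nonneg hle fun u hu => ?_
        rw [← neg_mul]
        refine mul_nonneg ?_ (hL.2.2.2 u ⟨hw.1.trans hu.1, hu.2.trans hv.2⟩)
        nlinarith [mul_nonneg (sub_nonneg.2 hu.1) (by linarith [hu.2] : 0 ≤ 1 - u - w)]
    · exact hQ.ge
end

section
/- Let f : [0,1] → ℝ be twice continuously differentiable and convex (f'' ≥ 0), let v ∈ [0,1] satisfy f(v) = f'(v) = 0, and define q(u) = ∫_v^u (1−2w) f'(w) dw. Then: (a) if v ≥ 1/2 and u ∈ [1/2, 1], then q(u) ≤ 0; (b) if v ≤ 1/2 and u ∈ [1−v, 1], then q(u) ≤ 0. -/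
open Set intervalIntegral

/-- Key computation in the proof of the 'if' direction of Proposition 2.4.
`f` plays the role of a boundary entropy `u ↦ ℱ(u,v)` and
`q u = ∫_v^u (1-2w) f'(w) dw` the associated boundary entropy flux for
`J u = u (1-u)`. -/
theorem stmt2 (f : ℝ → ℝ) (hf : ContDiff ℝ 2 f)
    (hconv : ∀ u ∈ Set.Icc (0:ℝ) 1, 0 ≤ deriv (deriv f) u)
    (v : ℝ) (hv : v ∈ Set.Icc (0:ℝ) 1) (hfv : f v = 0) (hf'v : deriv f v = 0)
    (q : ℝ → ℝ) (hq : ∀ u, q u = ∫ w in v..u, (1 - 2*w) * deriv f w) :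
    ((1/2 : ℝ) ≤ v → ∀ u ∈ Set.Icc (1/2 : ℝ) 1, q u ≤ 0) ∧
    (v ≤ (1/2 : ℝ) → ∀ u ∈ Set.Icc (1 - v) 1, q u ≤ 0) := by
  have hcont : Continuous (deriv f) := hf.continuous_deriv (by norm_num)
  have hdiff : Differentiable ℝ (deriv f) :=
    ((contDiff_succ_iff_deriv (n := 1)).1 hf).2.2.differentiable (by norm_num)
  have hmono : MonotoneOn (deriv f) (Icc 0 1) :=
    monotoneOn_of_deriv_nonneg (convex_Icc 0 1) hcont.continuousOn hdiff.differentiableOn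
      fun x hx => hconv x (interior_subset hx)
  constructor
  · intro hv2 u ⟨hu1, hu2⟩
    rw [hq]
    rcases le_total v u with h | h
    · rw [← neg_nonneg, ← integral_neg]
      refine integral_nonneg h fun w ⟨hw1, hw2⟩ => ?_
      have := hmono hv ⟨hv.1.trans hw1, hw2.trans hu2⟩ hw1
      exact neg_nonneg.2 (mul_nonpos_of_nonpos_of_nonneg (by linarith) (by linarith))
    · rw [integral_symm, neg_nonpos]
      refine integral_nonneg h fun w ⟨hw1, hw2⟩ => ?_
      have := hmono ⟨by linarith, hw2.trans hv.2⟩ hv hw2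
      exact mul_nonneg_of_nonpos_of_nonpos (by linarith) (by linarith)
  · intro hv2 u ⟨hu1, hu2⟩
    have hhalf : (1 / 2 : ℝ) ∈ Icc (0 : ℝ) 1 := by constructor <;> norm_num
    have hpos : 0 ≤ deriv f (1 / 2) := hf'v ▸ hmono hv hhalf hv2
    have hle : ∫ w in v..u, (1 - 2 * w) * deriv f w ≤
        ∫ w in v..u, (1 - 2 * w) * deriv f (1 / 2) := by
      refine integral_mono_on (by linarith)
        (Continuous.intervalIntegrable (by fun_prop) _ _)
        (Continuous.intervalIntegrable (by fun_prop) _ _) fun w ⟨hw1, hw2⟩ => ?_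
      have hw : w ∈ Icc (0 : ℝ) 1 := ⟨hv.1.trans hw1, hw2.trans hu2⟩
      rcases le_total w (1 / 2) with h | h
      · exact mul_le_mul_of_nonneg_left (hmono hw hhalf h) (by linarith)
      · exact mul_le_mul_of_nonpos_left (hmono hhalf hw h) (by linarith)
    have hint : ∫ w in v..u, (1 - 2 * w) = (u - v) * (1 - u - v) := by
      rw [integral_sub (by simp) (Continuous.intervalIntegrable (by fun_prop) _ _),
        integral_const_mul, integral_id, integral_const, smul_eq_mul]
      ring
    rw [integral_mul_const, hint] at hle
    rw [hq]
    exact hle.trans (mul_nonpos_of_nonpos_of_nonneg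
      (mul_nonpos_of_nonneg_of_nonpos (by linarith) (by linarith)) hpos)
end

section
/- Fix p > 0 and F ∈ C^∞(ℝ) with F(u) = |u| for all |u| > 1, F'(0) = 0, and F''(u) ≥ 0 for all u ∈ ℝ. For m ∈ ℕ and c ∈ ℚ define F_{m,c}(u) = m^{−1} F(m(u−c)) and Q_{m,c}(u) = ∫_c^u (1−2w) F'(m(w−c)) dw for u ∈ [0,1]. Let u ∈ L^∞((0,∞)×(0,1)) with 0 ≤ u ≤ 1 almost everywhere. If for every m ∈ ℕ, every c ∈ ℚ and every nonnegative ψ ∈ C_c^∞((0,∞)×(0,1)) one has ∫∫ [F_{m,c}(u) ∂_t ψ + p Q_{m,c}(u) ∂_x ψ] dx dt ≥ 0, then the same inequality ∫∫ [F(u) ∂_t ψ + p Q(u) ∂_x ψ] dx dt ≥ 0 holds for every Lax entropy flux pair (F, Q) and every nonnegative ψ ∈ C_c^∞((0,∞)×(0,1)). -/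
open Set MeasureTheory intervalIntegral

/-- The domain `(0,∞) × (0,1)`. -/
def Dom : Set (ℝ × ℝ) := Set.Ioi (0:ℝ) ×ˢ Set.Ioo (0:ℝ) 1

/-- A nonnegative smooth test function compactly supported in `(0,∞) × (0,1)`. -/
def IsTest (ψ : ℝ × ℝ → ℝ) : Prop :=
  ContDiff ℝ (⊤ : ℕ∞) ψ ∧ HasCompactSupport ψ ∧ tsupport ψ ⊆ Dom ∧ ∀ z, 0 ≤ ψ z

/-- The distributional entropy production
`∫∫ [F(u) ∂_t ψ + p Q(u) ∂_x ψ] dx dt` over `(0,∞) × (0,1)`. -/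
noncomputable def entProd (p : ℝ) (F Q : ℝ → ℝ) (u : ℝ × ℝ → ℝ) (ψ : ℝ × ℝ → ℝ) : ℝ :=
  ∫ z in Dom, (F (u z) * fderiv ℝ ψ z (1, 0) + p * Q (u z) * fderiv ℝ ψ z (0, 1))

theorem IsTest.integrable_fderiv_apply {ψ : ℝ × ℝ → ℝ} (hψ : IsTest ψ) (v : ℝ × ℝ) :
    Integrable (fun z => fderiv ℝ ψ z v) := by
  have hc : Continuous (fun z => fderiv ℝ ψ z v) :=
    (hψ.1.continuous_fderiv (by simp)).clm_apply continuous_const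
  exact hc.integrable_of_hasCompactSupport (hψ.2.1.fderiv_apply ℝ v)

theorem IsTest.setIntegral_fderiv_apply {ψ : ℝ × ℝ → ℝ} (hψ : IsTest ψ) (v : ℝ × ℝ) :
    ∫ z in Dom, fderiv ℝ ψ z v = 0 := by
  rw [setIntegral_eq_integral_of_forall_compl_eq_zero]
  · have h := integral_mul_fderiv_eq_neg_fderiv_mul_of_integrable (μ := (volume : Measure (ℝ × ℝ)))
      (f := fun _ => (1 : ℝ)) (g := ψ) (v := v) (by simp)
      (by simpa using hψ.integrable_fderiv_apply v)
      (by simpa using hψ.1.continuous.integrable_of_hasCompactSupport hψ.2.1)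
      (fun _ _ => differentiableAt_const _) (fun z _ => hψ.1.differentiable (by simp) z)
    simpa using h
  · intro z hz
    have : fderiv ℝ ψ z = 0 := by
      by_contra h
      exact hz (hψ.2.2.1 (support_fderiv_subset ℝ h))
    simp [this]

theorem integrable_comp_mul {u a : ℝ × ℝ → ℝ} (hu : Measurable u)
    (hub : ∀ z, u z ∈ Icc (0 : ℝ) 1) {μ : Measure (ℝ × ℝ)} (ha : Integrable a μ)
    {f : ℝ → ℝ} (hf : Continuous f) : Integrable (fun z => f (u z) * a z) μ := by
  obtain ⟨C, hC⟩ := isCompact_Icc.exists_bound_of_continuousOn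
    (hf.continuousOn (s := Icc (0 : ℝ) 1))
  exact ha.bdd_mul (hf.measurable.comp hu).aestronglyMeasurable
    (Filter.Eventually.of_forall fun z => hC _ (hub z))

theorem integrable_entProd {p : ℝ} {F Q : ℝ → ℝ} {u ψ : ℝ × ℝ → ℝ} (hF : Continuous F)
    (hQ : Continuous Q) (hu : Measurable u) (hub : ∀ z, u z ∈ Icc (0 : ℝ) 1) (hψ : IsTest ψ) :
    Integrable (fun z => F (u z) * fderiv ℝ ψ z (1, 0) + p * Q (u z) * fderiv ℝ ψ z (0, 1))
      (volume.restrict Dom) :=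
  (integrable_comp_mul hu hub (hψ.integrable_fderiv_apply _).integrableOn hF).add
    (integrable_comp_mul hu hub (hψ.integrable_fderiv_apply _).integrableOn
      (f := fun w => p * Q w) (continuous_const.mul hQ))

theorem entProd_const {p : ℝ} {u ψ : ℝ × ℝ → ℝ} (hψ : IsTest ψ) (a b : ℝ) :
    entProd p (fun _ => a) (fun _ => b) u ψ = 0 := by
  unfold entProd
  rw [integral_add ((hψ.integrable_fderiv_apply _).integrableOn.const_mul a)
    ((hψ.integrable_fderiv_apply _).integrableOn.const_mul _), MeasureTheory.integral_const_mul,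
    MeasureTheory.integral_const_mul, hψ.setIntegral_fderiv_apply, hψ.setIntegral_fderiv_apply]
  simp

theorem entProd_add_mul {p : ℝ} {F Q G R : ℝ → ℝ} {u ψ : ℝ × ℝ → ℝ} (hF : Continuous F)
    (hQ : Continuous Q) (hG : Continuous G) (hR : Continuous R) (hu : Measurable u)
    (hub : ∀ z, u z ∈ Icc (0 : ℝ) 1) (hψ : IsTest ψ) (c : ℝ) :
    entProd p (fun w => F w + c * G w) (fun w => Q w + c * R w) u ψ =
      entProd p F Q u ψ + c * entProd p G R u ψ := by
  unfold entProd
  rw [← MeasureTheory.integral_const_mul, ← integral_add (integrable_entProd hF hQ hu hub hψ)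
    ((integrable_entProd hG hR hu hub hψ).const_mul c)]
  congr 1 with z
  ring

theorem entProd_congr {p : ℝ} {F Q G R : ℝ → ℝ} {u ψ : ℝ × ℝ → ℝ}
    (hub : ∀ z, u z ∈ Icc (0 : ℝ) 1) (hFG : EqOn F G (Icc 0 1)) (hQR : EqOn Q R (Icc 0 1)) :
    entProd p F Q u ψ = entProd p G R u ψ := by
  unfold entProd
  congr 1 with z
  rw [hFG (hub z), hQR (hub z)]

/-- Nonnegativity of the entropy production is closed under uniform approximation on `[0,1]`. -/
theorem entProd_nonneg_of_approx {p : ℝ} {F Q : ℝ → ℝ} {u ψ : ℝ × ℝ → ℝ} (hF : Continuous F)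
    (hQ : Continuous Q) (hu : Measurable u) (hub : ∀ z, u z ∈ Icc (0 : ℝ) 1) (hψ : IsTest ψ)
    (happrox : ∀ ε > 0, ∃ G R : ℝ → ℝ, Continuous G ∧ Continuous R ∧ 0 ≤ entProd p G R u ψ ∧
      ∀ w ∈ Icc (0 : ℝ) 1, |G w - F w| ≤ ε ∧ |R w - Q w| ≤ ε) :
    0 ≤ entProd p F Q u ψ := by
  have ha := (hψ.integrable_fderiv_apply (1, 0)).integrableOn (s := Dom)
  have hb := (hψ.integrable_fderiv_apply (0, 1)).integrableOn (s := Dom)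
  have hbd : Integrable (fun z => |fderiv ℝ ψ z (1, 0)| + |p| * |fderiv ℝ ψ z (0, 1)|)
      (volume.restrict Dom) := ha.abs.add (hb.abs.const_mul _)
  set C := ∫ z in Dom, (|fderiv ℝ ψ z (1, 0)| + |p| * |fderiv ℝ ψ z (0, 1)|) with hC
  have hC0 : 0 ≤ C := integral_nonneg fun z => by positivity
  refine le_of_forall_pos_le_add fun δ hδ => ?_
  obtain ⟨G, R, hG, hR, h0, hGR⟩ := happrox (δ / (C + 1)) (by positivity)
  have hle : entProd p G R u ψ ≤ entProd p F Q u ψ + δ / (C + 1) * C := by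
    unfold entProd
    rw [hC, ← MeasureTheory.integral_const_mul, ← integral_add (integrable_entProd hF hQ hu hub hψ)
      (hbd.const_mul _)]
    refine integral_mono (integrable_entProd hG hR hu hub hψ)
      ((integrable_entProd hF hQ hu hub hψ).add (hbd.const_mul _)) fun z => ?_
    obtain ⟨h1, h2⟩ := hGR _ (hub z)
    have e1 : (G (u z) - F (u z)) * fderiv ℝ ψ z (1, 0) ≤
        δ / (C + 1) * |fderiv ℝ ψ z (1, 0)| := by
      refine (le_abs_self _).trans ?_
      rw [abs_mul]
      gcongr
    have e2 : (R (u z) - Q (u z)) * (p * fderiv ℝ ψ z (0, 1)) ≤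
        δ / (C + 1) * (|p| * |fderiv ℝ ψ z (0, 1)|) := by
      refine (le_abs_self _).trans ?_
      rw [abs_mul, abs_mul]
      gcongr
    simp only
    linarith
  have : δ / (C + 1) * C ≤ δ := by
    rw [div_mul_eq_mul_div, div_le_iff₀ (by positivity)]
    nlinarith
  linarith

theorem integral_abs_sub_left (c w : ℝ) : ∫ s in c..w, |s - c| = |w - c| * (w - c) / 2 := by
  rw [integral_comp_sub_right (fun s => |s|) c, sub_self]
  rcases le_total 0 (w - c) with h | h
  · rw [integral_congr (g := fun s => s) fun s hs => ?_, integral_id, abs_of_nonneg h]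
    · ring
    · rw [uIcc_of_le h] at hs
      exact abs_of_nonneg hs.1
  · rw [integral_congr (g := fun s => -s) fun s hs => ?_, intervalIntegral.integral_neg,
      integral_id, abs_of_nonpos h]
    · ring
    · rw [uIcc_of_ge h] at hs
      exact abs_of_nonpos hs.2

theorem exists_abs_sub_abs_le {F : ℝ → ℝ} (hF : Continuous F)
    (hFabs : ∀ u : ℝ, 1 < |u| → F u = |u|) : ∃ K, 0 ≤ K ∧ ∀ y, |F y - (|y|)| ≤ K := by
  obtain ⟨K, hK⟩ := isCompact_Icc.exists_bound_of_continuousOn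
    ((hF.sub continuous_abs).continuousOn (s := Icc (-1 : ℝ) 1))
  have hK0 : 0 ≤ K := (norm_nonneg _).trans (hK 0 (by simp))
  refine ⟨K, hK0, fun y => ?_⟩
  by_cases hy : 1 < |y|
  · simpa [hFabs y hy] using hK0
  · exact hK y (abs_le.1 (not_lt.1 hy))

section Rescaled

variable {F : ℝ → ℝ} {m c K : ℝ}

theorem abs_rescaled_sub_abs_le (hm : 0 < m) (hK : ∀ y, |F y - (|y|)| ≤ K) (w : ℝ) :
    |m⁻¹ * F (m * (w - c)) - (|w - c|)| ≤ m⁻¹ * K := by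
  have : m⁻¹ * F (m * (w - c)) - |w - c| = m⁻¹ * (F (m * (w - c)) - |m * (w - c)|) := by
    rw [abs_mul, abs_of_pos hm]
    field_simp
  rw [this, abs_mul, abs_of_pos (inv_pos.2 hm)]
  gcongr
  exact hK _

theorem integral_rescaled_flux (hF : ContDiff ℝ 1 F) (hm : 0 < m) (w : ℝ) :
    ∫ s in c..w, (1 - 2 * s) * deriv F (m * (s - c)) =
      (1 - 2 * w) * (m⁻¹ * F (m * (w - c))) - (1 - 2 * c) * (m⁻¹ * F (m * (c - c))) +
        2 * ∫ s in c..w, m⁻¹ * F (m * (s - c)) := by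
  have hF' : Continuous (deriv F) := hF.continuous_deriv le_rfl
  rw [intervalIntegral.integral_mul_deriv_eq_deriv_mul (u := fun s => 1 - 2 * s) (u' := fun _ => -2)
    (v := fun s => m⁻¹ * F (m * (s - c))) (v' := fun s => deriv F (m * (s - c))),
    intervalIntegral.integral_const_mul (-2 : ℝ)]
  · ring
  · intro s _
    simpa using ((hasDerivAt_id s).const_mul 2).const_sub 1
  · intro s _
    have h1 : HasDerivAt (fun s => m * (s - c)) m s := by
      simpa using ((hasDerivAt_id s).sub_const c).const_mul m
    have h2 := ((hF.differentiable one_ne_zero (m * (s - c))).hasDerivAt.comp s h1).const_mul m⁻¹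
    refine h2.congr_deriv ?_
    field_simp
  · exact intervalIntegrable_const
  · exact Continuous.intervalIntegrable (by fun_prop) _ _

theorem abs_rescaled_flux_sub_le (hF : ContDiff ℝ 1 F) (hm : 0 < m)
    (hK : ∀ y, |F y - (|y|)| ≤ K) {w : ℝ} (hw : w ∈ Icc (0 : ℝ) 1) :
    |(∫ s in c..w, (1 - 2 * s) * deriv F (m * (s - c))) - |w - c| * (1 - w - c)| ≤
      m⁻¹ * (K * (4 + 4 * |c|)) := by
  have hFc := hF.continuous
  have hK0 : 0 ≤ K := (abs_nonneg _).trans (hK 0)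
  have hmK : 0 ≤ m⁻¹ * K := by positivity
  have hlim : |w - c| * (1 - w - c) = (1 - 2 * w) * |w - c| - (1 - 2 * c) * |c - c| +
      2 * ∫ s in c..w, |s - c| := by
    rw [integral_abs_sub_left, sub_self, abs_zero]
    ring
  have h_int : |(∫ s in c..w, m⁻¹ * F (m * (s - c))) - (∫ s in c..w, |s - c|)| ≤
      m⁻¹ * K * |w - c| := by
    rw [← intervalIntegral.integral_sub (Continuous.intervalIntegrable (by fun_prop) _ _)
      (Continuous.intervalIntegrable (by fun_prop) _ _)]
    rw [← Real.norm_eq_abs]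
    exact norm_integral_le_of_norm_le_const fun s _ => abs_rescaled_sub_abs_le hm hK s
  have h1 : |(1 - 2 * w) * (m⁻¹ * F (m * (w - c)) - |w - c|)| ≤ 1 * (m⁻¹ * K) := by
    rw [abs_mul]
    gcongr
    · exact abs_le.2 ⟨by linarith [hw.2], by linarith [hw.1]⟩
    · exact abs_rescaled_sub_abs_le hm hK w
  have h2 : |(1 - 2 * c) * (m⁻¹ * F (m * (c - c)) - |c - c|)| ≤ (1 + 2 * |c|) * (m⁻¹ * K) := by
    rw [abs_mul]
    gcongr
    · refine (abs_sub _ _).trans ?_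
      simp [abs_mul]
    · exact abs_rescaled_sub_abs_le hm hK c
  have h3 : m⁻¹ * K * |w - c| ≤ m⁻¹ * K * (1 + |c|) := by
    gcongr
    refine (abs_sub _ _).trans ?_
    gcongr
    rw [abs_of_nonneg hw.1]
    exact hw.2
  rw [integral_rescaled_flux hF hm, hlim]
  rw [abs_le] at *
  constructor <;> linarith [h1.1, h1.2, h2.1, h2.2, h_int.1, h_int.2]

end Rescaled

/-- A Kruzhkov entropy inequality at a real level in `[0,1]` follows from those at rational
levels. -/
theorem entProd_kruzhkov_nonneg_of_rat {p : ℝ} {u ψ : ℝ × ℝ → ℝ} (hu : Measurable u)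
    (hub : ∀ z, u z ∈ Icc (0 : ℝ) 1) (hψ : IsTest ψ)
    (H : ∀ c : ℚ, 0 ≤ entProd p (fun w => |w - c|) (fun w => |w - c| * (1 - w - c)) u ψ)
    {v : ℝ} (hv : v ∈ Icc (0 : ℝ) 1) :
    0 ≤ entProd p (fun w => |w - v|) (fun w => |w - v| * (1 - w - v)) u ψ := by
  refine entProd_nonneg_of_approx (by fun_prop) (by fun_prop) hu hub hψ fun ε hε => ?_
  obtain ⟨c, hc1, hc2⟩ := exists_rat_btwn (show v < v + min (ε / 3) 1 by
    have : 0 < min (ε / 3) 1 := by positivity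
    linarith)
  have hcε : (c : ℝ) - v ≤ ε / 3 := by linarith [min_le_left (ε / 3) 1]
  have hc1' : (c : ℝ) - v ≤ 1 := by linarith [min_le_right (ε / 3) 1]
  refine ⟨_, _, by fun_prop, by fun_prop, H c, fun w hw => ?_⟩
  obtain ⟨hw0, hw1⟩ := hw
  obtain ⟨hv0, hv1⟩ := hv
  have h1 : |(|w - c|) - (|w - v|)| ≤ c - v := by
    refine (abs_abs_sub_abs_le _ _).trans (abs_le.2 ⟨by linarith, by linarith⟩)
  refine ⟨by linarith, ?_⟩
  have e : |w - c| * (1 - w - c) - |w - v| * (1 - w - v) =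
      (|w - c| - |w - v|) * (1 - w - v) - |w - c| * (c - v) := by ring
  have h2 : |(|w - c| - |w - v|) * (1 - w - v)| ≤ (c - v) * 1 := by
    rw [abs_mul]
    gcongr
    exact abs_le.2 ⟨by linarith, by linarith⟩
  have h3 : |(|w - c|) * (c - v)| ≤ 2 * (c - v) := by
    rw [abs_mul, abs_abs, abs_of_pos (sub_pos.2 hc1)]
    have : |w - c| ≤ 2 := abs_le.2 ⟨by linarith, by linarith⟩
    have := sub_pos.2 hc1
    gcongr
  rw [e]
  refine (abs_sub _ _).trans ?_
  linarith

/-- Representation of an entropy flux `Q` through the kernel `|w - v|`, for a general flux `J`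
whose difference quotient is `r`; the case `J = id` represents the entropy itself. -/
theorem integral_deriv_mul_abs_sub {f J Q : ℝ → ℝ} {r : ℝ → ℝ → ℝ} (hf : ContDiff ℝ 1 f)
    (hJ : Differentiable ℝ J) (hr : ∀ w v, J w - J v = (w - v) * r w v)
    (hrc : ∀ w, Continuous (r w)) (hQ : ∀ v ∈ Icc (0 : ℝ) 1, HasDerivAt Q (deriv J v * f v) v)
    {w : ℝ} (hw : w ∈ Icc (0 : ℝ) 1) :
    ∫ v in (0 : ℝ)..1, deriv f v * (|w - v| * r w v) =
      2 * Q w - (Q 0 + Q 1) - f 0 * (J w - J 0) - f 1 * (J w - J 1) := by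
  have hf' : Continuous (deriv f) := hf.continuous_deriv le_rfl
  have hrw := hrc w
  have h_int : ∀ a b, IntervalIntegrable (fun v => deriv f v * (|w - v| * r w v)) volume a b :=
    fun a b => Continuous.intervalIntegrable (by fun_prop) _ _
  have hd : ∀ v ∈ Icc (0 : ℝ) 1,
      HasDerivAt (fun v => f v * (J w - J v) + Q v) (deriv f v * ((w - v) * r w v)) v := by
    intro v hv
    have h := ((hf.differentiable one_ne_zero v).hasDerivAt.mul
      ((hJ v).hasDerivAt.const_sub (J w))).add (hQ v hv)
    refine h.congr_deriv ?_
    rw [← hr]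
    ring
  rw [← integral_add_adjacent_intervals (h_int 0 w) (h_int w 1),
    integral_congr (a := 0) (b := w) (g := fun v => deriv f v * ((w - v) * r w v)),
    integral_congr (a := w) (b := 1) (g := fun v => -(deriv f v * ((w - v) * r w v))),
    intervalIntegral.integral_neg,
    integral_eq_sub_of_hasDerivAt (a := 0) (b := w) (fun v hv => hd v ?_),
    integral_eq_sub_of_hasDerivAt (a := w) (b := 1) (fun v hv => hd v ?_)]
  · ring
  · exact Continuous.intervalIntegrable (by fun_prop) _ _
  · rw [uIcc_of_le hw.2] at hv
    exact ⟨hw.1.trans hv.1, hv.2⟩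
  · exact Continuous.intervalIntegrable (by fun_prop) _ _
  · rw [uIcc_of_le hw.1] at hv
    exact ⟨hv.1, hv.2.trans hw.2⟩
  · intro v hv
    rw [uIcc_of_le hw.2] at hv
    simp only [abs_of_nonpos (sub_nonpos.2 hv.1)]
    ring
  · intro v hv
    rw [uIcc_of_le hw.1] at hv
    simp only [abs_of_nonneg (sub_nonneg.2 hv.2)]

/-- Superposition of the Kruzhkov entropies with a nonnegative density. -/
theorem entProd_superposition_nonneg {p : ℝ} {g : ℝ → ℝ} {u ψ : ℝ × ℝ → ℝ} (hg : Continuous g)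
    (hg0 : ∀ v ∈ Icc (0 : ℝ) 1, 0 ≤ g v) (hu : Measurable u)
    (hub : ∀ z, u z ∈ Icc (0 : ℝ) 1) (hψ : IsTest ψ)
    (H : ∀ v ∈ Icc (0 : ℝ) 1,
      0 ≤ entProd p (fun w => |w - v|) (fun w => |w - v| * (1 - w - v)) u ψ) :
    0 ≤ entProd p (fun w => ∫ v in (0 : ℝ)..1, g v * |w - v|)
      (fun w => ∫ v in (0 : ℝ)..1, g v * (|w - v| * (1 - w - v))) u ψ := by
  have ha := (hψ.integrable_fderiv_apply (1, 0)).integrableOn (s := Dom)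
  have hb := (hψ.integrable_fderiv_apply (0, 1)).integrableOn (s := Dom)
  have hDom : MeasurableSet Dom := measurableSet_Ioi.prod measurableSet_Ioo
  obtain ⟨C, hC⟩ := isCompact_Icc.exists_bound_of_continuousOn
    (hg.continuousOn (s := Icc (0 : ℝ) 1))
  set a := fun z => fderiv ℝ ψ z (1, 0) with ha_def
  set b := fun z => fderiv ℝ ψ z (0, 1) with hb_def
  have key : entProd p (fun w => ∫ v in (0 : ℝ)..1, g v * |w - v|)
      (fun w => ∫ v in (0 : ℝ)..1, g v * (|w - v| * (1 - w - v))) u ψ =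
      ∫ z in Dom, ∫ v in Icc (0 : ℝ) 1,
        g v * (|u z - v| * a z + p * (|u z - v| * (1 - u z - v)) * b z) := by
    unfold entProd
    congr 1 with z
    rw [integral_Icc_eq_integral_Ioc, ← integral_of_le zero_le_one,
      ← intervalIntegral.integral_mul_const, mul_assoc, ← intervalIntegral.integral_mul_const,
      ← intervalIntegral.integral_const_mul, ← intervalIntegral.integral_add]
    · congr 1 with v
      simp only [ha_def, hb_def]
      ring
    · exact Continuous.intervalIntegrable (by fun_prop) _ _
    · exact Continuous.intervalIntegrable (by fun_prop) _ _
  rw [key, integral_integral_swap]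
  · refine setIntegral_nonneg measurableSet_Icc fun v hv => ?_
    rw [MeasureTheory.integral_const_mul]
    exact mul_nonneg (hg0 v hv) (H v hv)
  · have hbd : Integrable (fun x : (ℝ × ℝ) × ℝ => (|a x.1| + |p| * |b x.1|) * C)
        ((volume.restrict Dom).prod (volume.restrict (Icc (0 : ℝ) 1))) :=
      Integrable.mul_prod (f := fun z => |a z| + |p| * |b z|) (g := fun _ => C)
        (ha.abs.add (hb.abs.const_mul _)) (by fun_prop)
    have hcψ := hψ.1.continuous_fderiv (by simp)
    have hac : Continuous a := hcψ.clm_apply continuous_const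
    have hbc : Continuous b := hcψ.clm_apply continuous_const
    have ham := hac.measurable
    have hbm := hbc.measurable
    have hgm := hg.measurable
    refine hbd.mono' ?_ ?_
    · refine Measurable.aestronglyMeasurable ?_
      unfold Function.uncurry
      fun_prop
    · rw [Measure.prod_restrict]
      filter_upwards [ae_restrict_mem (hDom.prod measurableSet_Icc)] with x hx
      obtain ⟨hv0, hv1⟩ := hx.2
      obtain ⟨hu0, hu1⟩ := hub x.1
      have hgC := hC x.2 hx.2
      have h1 : |u x.1 - x.2| ≤ 1 := abs_le.2 ⟨by linarith, by linarith⟩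
      have h2 : |1 - u x.1 - x.2| ≤ 1 := abs_le.2 ⟨by linarith, by linarith⟩
      rw [Function.uncurry, norm_mul, mul_comm]
      gcongr
      refine (norm_add_le _ _).trans ?_
      simp only [norm_mul, Real.norm_eq_abs, abs_abs]
      have h3 : |u x.1 - x.2| * |1 - u x.1 - x.2| ≤ 1 := mul_le_one₀ h1 (abs_nonneg _) h2
      gcongr
      · exact mul_le_of_le_one_left (abs_nonneg _) h1
      · exact mul_le_of_le_one_right (abs_nonneg _) h3

/-- The Kruzhkov entropy inequalities imply the entropy inequality for every Lax pair. -/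
theorem entProd_nonneg_of_kruzhkov {p : ℝ} {F Q : ℝ → ℝ} {u ψ : ℝ × ℝ → ℝ}
    (hFQ : IsLaxPair F Q) (hu : Measurable u) (hub : ∀ z, u z ∈ Icc (0 : ℝ) 1) (hψ : IsTest ψ)
    (H : ∀ v ∈ Icc (0 : ℝ) 1,
      0 ≤ entProd p (fun w => |w - v|) (fun w => |w - v| * (1 - w - v)) u ψ) :
    0 ≤ entProd p F Q u ψ := by
  obtain ⟨hF, hQ, hQF, hconv⟩ := hFQ
  have hF1 : ContDiff ℝ 1 (deriv F) := hF.deriv' (n := 1)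
  have hFd : Differentiable ℝ F := hF.differentiable two_ne_zero
  have hQd : Differentiable ℝ Q := hQ.differentiable two_ne_zero
  have hFc := hF.continuous
  have hQc := hQ.continuous
  have hJ : ∀ v : ℝ, HasDerivAt (fun w : ℝ => w * (1 - w)) (1 - 2 * v) v := by
    intro v
    refine ((hasDerivAt_id v).mul ((hasDerivAt_id v).const_sub 1)).congr_deriv ?_
    simp only [id]
    ring
  set A := F 0 + F 1 - deriv F 1 with hA
  set B := deriv F 0 + deriv F 1 with hB
  have hent : EqOn (fun w => ∫ v in (0 : ℝ)..1, deriv (deriv F) v * |w - v|)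
      (fun w => (-A + 2 * F w) + (-B) * w) (Icc 0 1) := by
    intro w hw
    have h := integral_deriv_mul_abs_sub (J := fun w => w) (Q := F) (r := fun _ _ => 1) hF1
      (by fun_prop) (by intros; ring) (by fun_prop)
      (fun v _ => by simpa using (hFd v).hasDerivAt) hw
    simp only [mul_one] at h
    simp only [h, hA, hB]
    ring
  have hflux : EqOn (fun w => ∫ v in (0 : ℝ)..1, deriv (deriv F) v * (|w - v| * (1 - w - v)))
      (fun w => (-(Q 0 + Q 1) + 2 * Q w) + (-B) * (w * (1 - w))) (Icc 0 1) := by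
    intro w hw
    have h := integral_deriv_mul_abs_sub (J := fun w => w * (1 - w)) (Q := Q)
      (r := fun w v => 1 - w - v) hF1 (by fun_prop) (by intros; ring) (by fun_prop)
      (fun v hv => by
        rw [(hJ v).deriv, ← hQF v hv]
        exact (hQd v).hasDerivAt) hw
    simp only [h, hB]
    ring
  have hsup := entProd_superposition_nonneg (hF1.continuous_deriv le_rfl) hconv hu hub hψ H
  rw [entProd_congr hub hent hflux,
    entProd_add_mul (by fun_prop) (by fun_prop) (by fun_prop) (by fun_prop) hu hub hψ,
    entProd_add_mul continuous_const continuous_const hFc hQc hu hub hψ,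
    entProd_const hψ] at hsup
  have h0 := H 0 (by simp)
  rw [entProd_congr (G := fun w => w) (R := fun w => w * (1 - w)) hub
    (fun w hw => by simp [abs_of_nonneg hw.1]) (fun w hw => by simp [abs_of_nonneg hw.1])] at h0
  have h1 := H 1 (by simp)
  rw [entProd_congr (G := fun w => 1 + (-1) * w) (R := fun w => 0 + (-1) * (w * (1 - w))) hub
    (fun w hw => by
      simp only [abs_of_nonpos (sub_nonpos.2 hw.2)]
      ring)
    (fun w hw => by
      simp only [abs_of_nonpos (sub_nonpos.2 hw.2)]
      ring),
    entProd_add_mul (by fun_prop) (by fun_prop) (by fun_prop) (by fun_prop) hu hub hψ,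
    entProd_const hψ] at h1
  have hlin : entProd p (fun w => w) (fun w => w * (1 - w)) u ψ = 0 := by linarith
  rw [hlin] at hsup
  linarith

/-- The entropy production depends on `u` only up to null sets of the domain. -/
theorem entProd_congr_ae {p : ℝ} {F Q : ℝ → ℝ} {u v ψ : ℝ × ℝ → ℝ}
    (huv : u =ᵐ[volume.restrict Dom] v) : entProd p F Q u ψ = entProd p F Q v ψ := by
  refine integral_congr_ae ?_
  filter_upwards [huv] with z hz
  rw [hz]

/-- Remark 2.2: the entropy inequality for the countable family
`(F_{m,c}, Q_{m,c})`, `m ∈ ℕ`, `c ∈ ℚ`, implies it for all Lax entropy flux pairs. -/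
theorem stmt3 (p : ℝ) (hp : 0 < p)
    (F : ℝ → ℝ) (hF : ContDiff ℝ (⊤ : ℕ∞) F)
    (hFabs : ∀ u : ℝ, 1 < |u| → F u = |u|)
    (hF0 : deriv F 0 = 0) (hFconv : ∀ u : ℝ, 0 ≤ deriv (deriv F) u)
    (u : ℝ × ℝ → ℝ) (hu : Measurable u)
    (hub : ∀ᵐ z ∂(volume.restrict Dom), u z ∈ Set.Icc (0:ℝ) 1)
    (H : ∀ m : ℕ, 0 < m → ∀ c : ℚ, ∀ ψ : ℝ × ℝ → ℝ, IsTest ψ →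
      0 ≤ entProd p (fun w => (m:ℝ)⁻¹ * F (m * (w - c)))
            (fun w => ∫ s in (c:ℝ)..w, (1 - 2*s) * deriv F (m * (s - c))) u ψ) :
    ∀ F' Q' : ℝ → ℝ, IsLaxPair F' Q' → ∀ ψ : ℝ × ℝ → ℝ, IsTest ψ →
      0 ≤ entProd p F' Q' u ψ := by
  intro F' Q' hFQ ψ hψ
  set v : ℝ × ℝ → ℝ := fun z => max 0 (min 1 (u z)) with hv_def
  have huv : u =ᵐ[volume.restrict Dom] v := by
    filter_upwards [hub] with z hz
    simp [hv_def, hz.1, hz.2]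
  have hv : Measurable v := by fun_prop
  have hvb : ∀ z, v z ∈ Icc (0 : ℝ) 1 := fun z => ⟨le_max_left _ _, by simp [hv_def]⟩
  have hF1 : ContDiff ℝ 1 F := hF.of_le (by simp)
  have hFc := hF1.continuous
  have hFd : Continuous (deriv F) := hF1.continuous_deriv le_rfl
  obtain ⟨K, hK0, hK⟩ := exists_abs_sub_abs_le hFc hFabs
  rw [entProd_congr_ae huv]
  refine entProd_nonneg_of_kruzhkov hFQ hv hvb hψ fun w hw =>
    entProd_kruzhkov_nonneg_of_rat hv hvb hψ (fun c => ?_) hw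
  refine entProd_nonneg_of_approx (by fun_prop) (by fun_prop) hv hvb hψ fun ε hε => ?_
  obtain ⟨n, hn⟩ := exists_nat_gt (K * (4 + 4 * |(c : ℝ)|) / ε)
  have hn0 : (0 : ℝ) < n := lt_of_le_of_lt (by positivity) hn
  have hnε : (n : ℝ)⁻¹ * (K * (4 + 4 * |(c : ℝ)|)) ≤ ε := by
    rw [inv_mul_le_iff₀ hn0]
    exact ((div_lt_iff₀ hε).1 hn).le
  have hHn := H n (by exact_mod_cast hn0) c ψ hψ
  rw [entProd_congr_ae huv] at hHn
  refine ⟨_, _, by fun_prop, ?_, hHn, fun w hw => ⟨?_, ?_⟩⟩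
  · exact continuous_primitive (fun a b => Continuous.intervalIntegrable (by fun_prop) _ _) _
  · refine (abs_rescaled_sub_abs_le hn0 hK w).trans (le_trans ?_ hnε)
    gcongr
    exact le_mul_of_one_le_right hK0 (by linarith [abs_nonneg (c : ℝ)])
  · exact (abs_rescaled_flux_sub_le hF1 hn0 hK hw).trans hnε
end
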